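/- Let p be a prime and let K be an intermediate field of a fixed algebraic closure of ℚ_p over ℚ_p that is a finite Galois extension of ℚ_p. Then the Galois group Gal(K/ℚ_p) is a solvable group. -/

import Mathlib

/-!
Every automorphism of a finite extension of a local field is an isometry for the spectral norm.
Commutators of automorphisms act trivially on the residue field, because the automorphisms of a
finite field commute. On a group acting trivially on the residue field, the cocycle `g ↦ g x / x`
is a homomorphism to the units modulo the maximal ideal for each `x ≠ 0`, so its commutators `g`
satisfy `‖g x - x‖ < ‖x‖`; local compactness upgrades this to `‖g x - x‖ ≤ r ‖x‖` with `r < 1`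
independent of `x`. Finally, `g h - h g = (g - 1)(h - 1) - (h - 1)(g - 1)` shows that each further
commutator squares the bound `r`, and only the identity of a finite group moves all points by an
arbitrarily small proportion of their norm.
-/

open IsUltrametricDist
open scoped NNReal

section Displacement

variable {G V : Type*} [Group G] [SeminormedAddCommGroup V]

lemma nnnorm_sub_le_max [IsUltrametricDist V] (x y : V) : ‖x - y‖₊ ≤ max ‖x‖₊ ‖y‖₊ := by
  simpa [sub_eq_add_neg] using nnnorm_add_le_max x (-y)

variable [DistribMulAction G V] [IsIsometricSMul G V]

lemma nnnorm_isometric_smul (g : G) (x : V) : ‖g • x‖₊ = ‖x‖₊ := by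
  simpa using nndist_smul g x 0

variable [IsUltrametricDist V]

variable (G V) in
/-- The group elements moving each vector by at most `r` times its norm. On a local field with
uniformizer `π` and `r = ‖π‖ ^ n`, these are the automorphisms acting trivially on every quotient
`𝔪 ^ j / 𝔪 ^ (j + n)`, a variant of the ramification filtration. -/
def displacementSubgroup (r : ℝ≥0) : Subgroup G where
  carrier := {g | ∀ x : V, ‖g • x - x‖₊ ≤ r * ‖x‖₊}
  one_mem' := by simp
  mul_mem' {g h} hg hh x :=
    calc ‖(g * h) • x - x‖₊
      _ = ‖g • (h • x - x) + (g • x - x)‖₊ := by rw [smul_sub, mul_smul, sub_add_sub_cancel]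
      _ ≤ max ‖g • (h • x - x)‖₊ ‖g • x - x‖₊ := nnnorm_add_le_max _ _
      _ ≤ r * ‖x‖₊ := max_le (by simpa [nnnorm_isometric_smul] using hh x) (hg x)
  inv_mem' {g} hg x := by
    rw [← nnnorm_neg, neg_sub]
    simpa [nnnorm_isometric_smul] using hg (g⁻¹ • x)

lemma commutator_le_displacementSubgroup {H₁ H₂ : Subgroup G} {r : ℝ≥0}
    (hH : ∀ g ∈ H₁, ∀ h ∈ H₂, ∀ x : V, ‖g • h • x - h • g • x‖₊ ≤ r * ‖x‖₊) :
    ⁅H₁, H₂⁆ ≤ displacementSubgroup G V r := by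
  refine Subgroup.commutator_le.2 fun g hg h hh x => ?_
  simpa [commutatorElement_def, mul_smul, nnnorm_isometric_smul] using
    hH g hg h hh (g⁻¹ • h⁻¹ • x)

variable (G V) in
lemma commutator_displacementSubgroup_le (r s : ℝ≥0) :
    ⁅displacementSubgroup G V r, displacementSubgroup G V s⁆ ≤
      displacementSubgroup G V (r * s) := by
  refine commutator_le_displacementSubgroup fun g hg h hh x => ?_
  have hgh : ‖g • (h • x - x) - (h • x - x)‖₊ ≤ r * s * ‖x‖₊ :=
    calc _ ≤ r * ‖h • x - x‖₊ := hg _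
      _ ≤ r * (s * ‖x‖₊) := by gcongr; exact hh x
      _ = r * s * ‖x‖₊ := by ring
  have hhg : ‖h • (g • x - x) - (g • x - x)‖₊ ≤ r * s * ‖x‖₊ :=
    calc _ ≤ s * ‖g • x - x‖₊ := hh _
      _ ≤ s * (r * ‖x‖₊) := by gcongr; exact hg x
      _ = r * s * ‖x‖₊ := by ring
  have hsub : g • h • x - h • g • x =
      g • (h • x - x) - (h • x - x) - (h • (g • x - x) - (g • x - x)) := by
    simp only [smul_sub]
    abel
  rw [hsub]
  exact (nnnorm_sub_le_max _ _).trans (max_le hgh hhg)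

lemma derivedSeries_add_le_displacementSubgroup {r : ℝ≥0} {k : ℕ}
    (hk : derivedSeries G k ≤ displacementSubgroup G V r) (n : ℕ) :
    derivedSeries G (k + n) ≤ displacementSubgroup G V (r ^ 2 ^ n) := by
  induction n with
  | zero => simpa using hk
  | succ n ih =>
    rw [pow_succ 2, pow_mul, sq]
    exact (Subgroup.commutator_mono ih ih).trans (commutator_displacementSubgroup_le G V _ _)

end Displacement

section Faithful

variable {G V : Type*} [Group G] [NormedAddCommGroup V] [DistribMulAction G V]
  [IsIsometricSMul G V] [IsUltrametricDist V] [FaithfulSMul G V]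

open Filter Topology

variable (G V) in
lemma eventually_displacementSubgroup_eq_bot [Finite G] :
    ∀ᶠ r in 𝓝 0, displacementSubgroup G V r = ⊥ := by
  simp only [Subgroup.eq_bot_iff_forall, eventually_all]
  intro g
  by_cases hg : g = 1
  · simp [hg]
  obtain ⟨x, hx⟩ : ∃ x : V, g • x ≠ x := by
    by_contra! h
    exact hg (FaithfulSMul.eq_of_smul_eq_smul fun x : V => by simpa using h x)
  have hlim : Tendsto (fun r : ℝ≥0 => r * ‖x‖₊) (𝓝 0) (𝓝 0) := by
    simpa using (tendsto_id (α := ℝ≥0) (x := 𝓝 0)).mul_const ‖x‖₊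
  filter_upwards [hlim.eventually_lt_const (nnnorm_pos.2 (sub_ne_zero.2 hx))] with r hr hgr
  exact absurd (hgr x) hr.not_ge

lemma isSolvable_of_derivedSeries_le_displacementSubgroup [Finite G] {r : ℝ≥0} (hr : r < 1)
    {k : ℕ} (hk : derivedSeries G k ≤ displacementSubgroup G V r) : Group.IsSolvable G := by
  have hlim : Tendsto (fun n => r ^ 2 ^ n) atTop (𝓝 0) :=
    (NNReal.tendsto_pow_atTop_nhds_zero_of_lt_one hr).comp
      (tendsto_pow_atTop_atTop_of_one_lt one_lt_two)
  obtain ⟨n, hn⟩ := (hlim.eventually (eventually_displacementSubgroup_eq_bot G V)).exists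
  exact ⟨k + n, eq_bot_iff.2 (hn ▸ derivedSeries_add_le_displacementSubgroup hk n)⟩

end Faithful

instance isMulCommutative_ringAut (k : Type*) [Field k] [Finite k] :
    IsMulCommutative (RingAut k) where
  is_comm.comm σ τ := by
    obtain ⟨m, hm⟩ := (Units.map (σ : k →* k)).map_cyclic
    have hσ (u : kˣ) : σ u = (u : k) ^ m := by simpa using congrArg Units.val (hm u)
    ext x
    obtain rfl | hx := eq_or_ne x 0
    · simp
    lift x to kˣ using hx.isUnit
    calc σ (τ x) = τ x ^ m := hσ (Units.map (τ : k →* k) x)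
      _ = τ (σ x) := by rw [hσ, map_zpow₀]

section NormedField

variable {G K : Type*} [Group G] [NormedField K] [IsUltrametricDist K]

variable (K) in
lemma exists_lt_one_forall_nnnorm_le_mul [ProperSpace K] :
    ∃ r : ℝ≥0, r < 1 ∧ ∀ x y : K, ‖x‖₊ < ‖y‖₊ → ‖x‖₊ ≤ r * ‖y‖₊ := by
  have hcompact : IsCompact (Metric.ball (0 : K) 1) :=
    (isCompact_closedBall 0 1).of_isClosed_subset (isClosed_ball 0 1)
      Metric.ball_subset_closedBall
  obtain ⟨z, hz, hmax⟩ := hcompact.exists_isMaxOn ⟨0, by simp⟩ continuous_nnnorm.continuousOn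
  refine ⟨‖z‖₊, mem_ball_zero_iff.1 hz, fun x y hxy => ?_⟩
  have hy : 0 < ‖y‖₊ := pos_of_gt hxy
  have hdiv : ‖x / y‖₊ < 1 := by rwa [nnnorm_div, div_lt_one hy]
  rw [← div_le_iff₀ hy, ← nnnorm_div]
  exact hmax (mem_ball_zero_iff.2 hdiv)

variable [MulSemiringAction G K] [IsIsometricSMul G K]

lemma nnnorm_smul_smul_sub_lt {g h : G} (hg : ∀ x : K, ‖x‖₊ ≤ 1 → ‖g • x - x‖₊ < 1)
    (hh : ∀ x : K, ‖x‖₊ ≤ 1 → ‖h • x - x‖₊ < 1) {x : K} (hx : x ≠ 0) :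
    ‖g • h • x - h • g • x‖₊ < ‖x‖₊ := by
  obtain ⟨a, ha⟩ : ∃ a, g • x = a * x := ⟨g • x / x, (div_mul_cancel₀ _ hx).symm⟩
  obtain ⟨b, hb⟩ : ∃ b, h • x = b * x := ⟨h • x / x, (div_mul_cancel₀ _ hx).symm⟩
  have hx' : ‖x‖₊ ≠ 0 := nnnorm_ne_zero_iff.2 hx
  have ha' : ‖a‖₊ = 1 := by simpa [hx', nnnorm_isometric_smul] using congrArg (‖·‖₊) ha
  have hb' : ‖b‖₊ = 1 := by simpa [hx', nnnorm_isometric_smul] using congrArg (‖·‖₊) hb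
  have hfactor : g • h • x - h • g • x = ((g • b - b) * a - (h • a - a) * b) * x := by
    rw [ha, hb, smul_mul', smul_mul', ha, hb]
    ring
  have hlt : ‖(g • b - b) * a - (h • a - a) * b‖₊ < 1 := by
    refine (nnnorm_sub_le_max _ _).trans_lt (max_lt ?_ ?_)
    · simpa [ha'] using hg b hb'.le
    · simpa [hb'] using hh a ha'.le
  rw [hfactor, nnnorm_mul]
  exact mul_lt_of_lt_one_left (pos_iff_ne_zero.2 hx') hlt

end NormedField

section NontriviallyNormedField

open scoped Valued NormedField

variable {G K : Type*} [Group G] [NontriviallyNormedField K] [IsUltrametricDist K]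

open Valued.integer in
instance finite_residueField [ProperSpace K] : Finite 𝓀[K] := by
  have hball : (𝒪[K] : Set K) = Metric.closedBall 0 1 := by
    ext x
    simp [Valued.integer.mem_iff]
  have hcompact : CompactSpace 𝒪[K] :=
    isCompact_iff_compactSpace.1 (hball ▸ isCompact_closedBall 0 1)
  have : (Valued.v : Valuation K ℝ≥0).RankOne :=
    inferInstanceAs (NormedField.valuation (K := K)).RankOne
  obtain ⟨-, -, hfinite⟩ :=
    compactSpace_iff_completeSpace_and_isDiscreteValuationRing_and_finite_residueField.1 hcompact
  exact hfinite

variable [MulSemiringAction G K] [IsIsometricSMul G K]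

instance isInvariantSubring_integer : IsInvariantSubring G 𝒪[K] where
  smul_mem g x hx := by
    rw [Valued.integer.mem_iff, ← coe_nnnorm] at hx ⊢
    rwa [nnnorm_isometric_smul]

lemma nnnorm_smul_sub_lt_one_of_mem_commutator [Finite 𝓀[K]] {g : G} (hg : g ∈ commutator G)
    {x : K} (hx : ‖x‖₊ ≤ 1) : ‖g • x - x‖₊ < 1 := by
  open scoped IsMulCommutative in
  have hker : g ∈ (MulSemiringAction.toRingAut G 𝓀[K]).ker :=
    Abelianization.commutator_subset_ker _ hg
  let y : 𝒪[K] := ⟨x, Valued.integer.mem_iff.2 hx⟩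
  have hres : IsLocalRing.residue 𝒪[K] (g • y - y) = 0 := by
    rw [map_sub, sub_eq_zero]
    exact DFunLike.congr_fun hker (IsLocalRing.residue 𝒪[K] y)
  have hnonunit : ¬ IsUnit (g • y - y) := (IsLocalRing.residue_eq_zero_iff _).1 hres
  rw [Valued.integer.isUnit_iff_norm_eq_one] at hnonunit
  exact NNReal.coe_lt_coe.1 ((Valued.integer.norm_le_one (g • y - y)).lt_of_ne hnonunit)

variable (G K) in
theorem isSolvable_of_isIsometricSMul [ProperSpace K] [FaithfulSMul G K] [Finite G] :
    Group.IsSolvable G := by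
  obtain ⟨r, hr, hgap⟩ := exists_lt_one_forall_nnnorm_le_mul K
  suffices derivedSeries G 2 ≤ displacementSubgroup G K r from
    isSolvable_of_derivedSeries_le_displacementSubgroup hr this
  rw [derivedSeries_succ, derivedSeries_one]
  refine commutator_le_displacementSubgroup fun g hg h hh x => ?_
  obtain rfl | hx := eq_or_ne x 0
  · simp
  exact hgap _ _ (nnnorm_smul_smul_sub_lt
    (fun _ => nnnorm_smul_sub_lt_one_of_mem_commutator hg)
    (fun _ => nnnorm_smul_sub_lt_one_of_mem_commutator hh) hx)

end NontriviallyNormedField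

theorem galois_group_of_padic_isSolvable_general (F L : Type*) [NontriviallyNormedField F]
    [IsUltrametricDist F] [ProperSpace F] [Field L] [Algebra F L] [FiniteDimensional F L] :
    Group.IsSolvable (L ≃ₐ[F] L) := by
  let := spectralNorm.nontriviallyNormedField F L
  let := spectralNorm.normedSpace F L
  have : IsUltrametricDist L :=
    isUltrametricDist_of_isNonarchimedean_norm isNonarchimedean_spectralNorm
  have : ProperSpace L := FiniteDimensional.proper F L
  have : IsIsometricSMul (L ≃ₐ[F] L) L :=
    ⟨fun σ => AddMonoidHomClass.isometry_of_norm σ fun x => (spectralNorm_eq_of_equiv σ x).symm⟩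
  exact isSolvable_of_isIsometricSMul (L ≃ₐ[F] L) L

/-- Let `p` be a prime and `K` an intermediate field of a fixed algebraic closure of `ℚ_p`
over `ℚ_p` that is a finite Galois extension of `ℚ_p`.  Then the Galois group
`Gal(K/ℚ_p)` is a solvable group. -/
theorem galois_group_of_padic_isSolvable
    (p : ℕ) [Fact p.Prime] (K : IntermediateField ℚ_[p] (AlgebraicClosure ℚ_[p]))
    [FiniteDimensional ℚ_[p] K] [IsGalois ℚ_[p] K] :
    IsSolvable (K ≃ₐ[ℚ_[p]] K) := by
  exact galois_group_of_padic_isSolvable_general ℚ_[p] K
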